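/- Let G be a 2-tree on at least 3 vertices. Then G has a Hamiltonian cycle if and only if for every nonempty proper subset S of V(G), the graph G − S has at most |S| connected components. -/

import Mathlib

/-!
Following a Hamiltonian cycle, each component of `G - S` is left into its own vertex of `S`, which
gives the forward direction for an arbitrary graph (`card_components_le_of_hamCycle`).

For the converse only sets `S = {a, b}` with `ab` an edge are needed. In a 2-tree, the common
neighbours of adjacent vertices `a`, `b` lie in pairwise distinct components of `G - {a, b}`; this
is shown by building, along the construction of the 2-tree, a labelling that is constant on these
components and separates the common neighbours (`IsTwoTree.exists_labelling`). Hence Chvátal's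
condition forces every edge to lie in at most two triangles (`IsTwoTree.atMostTwoTriangles`).
Such a 2-tree is a triangulated polygon, and its boundary is a Hamiltonian cycle containing all
outer edges, those in at most one triangle (`IsTwoTree.exists_hamCycle`): a new vertex `z` can only
be attached to an outer edge `uv`, and replacing `uv` by `u, z, v` extends the cycle.
-/


open SimpleGraph

/-- `IsTwoTree V G` : the simple graph `G` on `ℕ` with support (vertex set) `V` is a 2-tree,
defined inductively: a single edge is a 2-tree, and adding a new vertex `z` adjacent to
exactly the two endpoints `u, v` of an existing edge yields a 2-tree. -/
inductive IsTwoTree : Finset ℕ → SimpleGraph ℕ → Prop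
  | base (u v : ℕ) (huv : u ≠ v) :
      IsTwoTree {u, v} (fromEdgeSet {s(u, v)})
  | grow {V : Finset ℕ} {G : SimpleGraph ℕ} (hG : IsTwoTree V G)
      (u v z : ℕ) (huv : G.Adj u v) (hz : z ∉ V) (hzu : z ≠ u) (hzv : z ≠ v) :
      IsTwoTree (insert z V) (G ⊔ fromEdgeSet {s(z, u), s(z, v)})


/-- `p` is a Hamiltonian path of the graph `G` with vertex set `V`: a path whose support
is exactly `V`. -/
def IsHamPathOn (V : Finset ℕ) {G : SimpleGraph ℕ} {s t : ℕ} (p : G.Walk s t) : Prop :=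
  p.IsPath ∧ ∀ x, x ∈ p.support ↔ x ∈ V

/-- `p` is a Hamiltonian cycle of the graph `G` with vertex set `V`: a cycle whose support
is exactly `V`. -/
def IsHamCycleOn (V : Finset ℕ) {G : SimpleGraph ℕ} {a : ℕ} (p : G.Walk a a) : Prop :=
  p.IsCycle ∧ ∀ x, x ∈ p.support ↔ x ∈ V

/-! ### Edges and separation in 2-trees -/

theorem IsTwoTree.mem_of_adj {V : Finset ℕ} {G : SimpleGraph ℕ} (h : IsTwoTree V G) :
    ∀ p q, G.Adj p q → p ∈ V ∧ q ∈ V := by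
  induction h with
  | base u v huv =>
    intro p q h
    simp only [fromEdgeSet_adj, Set.mem_singleton_iff, Sym2.eq_iff] at h
    simp only [Finset.mem_insert, Finset.mem_singleton]
    grind
  | @grow V G hG u v z huv hz hzu hzv ih =>
    intro p q h
    have := ih u v huv
    simp only [sup_adj, fromEdgeSet_adj, Set.mem_insert_iff, Set.mem_singleton_iff,
      Sym2.eq_iff] at h
    simp only [Finset.mem_insert]
    grind

theorem grow_adj_iff {G : SimpleGraph ℕ} {u v z : ℕ} (hzu : z ≠ u) (hzv : z ≠ v) (p q : ℕ) :
    (G ⊔ fromEdgeSet {s(z, u), s(z, v)}).Adj p q ↔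
      G.Adj p q ∨ (p = z ∧ (q = u ∨ q = v)) ∨ (q = z ∧ (p = u ∨ p = v)) := by
  simp only [sup_adj, fromEdgeSet_adj, Set.mem_insert_iff, Set.mem_singleton_iff, Sym2.eq_iff]
  grind

/-- The common neighbours of an edge `ab` of a 2-tree are separated by `{a, b}`: there is a
labelling, constant along the edges avoiding `a` and `b`, under which every common neighbour is
its own label. -/
theorem IsTwoTree.exists_labelling {V : Finset ℕ} {G : SimpleGraph ℕ} (h : IsTwoTree V G) :
    ∀ a b, G.Adj a b → ∃ f : ℕ → ℕ,
      (∀ p q, G.Adj p q → p ≠ a → p ≠ b → q ≠ a → q ≠ b → f p = f q) ∧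
      ∀ x, G.Adj a x → G.Adj b x → f x = x := by
  induction h with
  | base u v huv =>
    intro a b hab
    refine ⟨fun _ => 0, fun _ _ _ _ _ _ _ => rfl, fun x hx hx' => ?_⟩
    simp only [fromEdgeSet_adj, Set.mem_singleton_iff, Sym2.eq_iff] at hab hx hx'
    grind
  | @grow V G hG u v z huv hz hzu hzv ih =>
    have hmem := hG.mem_of_adj
    have hzn : ∀ p, ¬ G.Adj z p := fun p hp => hz (hmem _ _ hp).1
    have hnz : ∀ p, ¬ G.Adj p z := fun p hp => hz (hmem _ _ hp).2
    intro a b hab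
    simp only [grow_adj_iff hzu hzv] at hab ⊢
    by_cases hG' : G.Adj a b
    · obtain ⟨f, hf, hfx⟩ := ih a b hG'
      have haz : a ≠ z := fun h => hzn b (h ▸ hG')
      have hbz : b ≠ z := fun h => hnz a (h ▸ hG')
      have huv' := huv.ne
      have hfuv := hf u v huv
      -- The new vertex inherits the label of an endpoint of `uv` outside `{a, b}`, and its own
      -- name as label when there is none.
      refine ⟨fun x => if x = z then
        (if u ≠ a ∧ u ≠ b then f u else if v ≠ a ∧ v ≠ b then f v else z) else f x, ?_, ?_⟩
      · intro p q hpq h1 h2 h3 h4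
        rcases hpq with hpq | ⟨rfl, hq⟩ | ⟨rfl, hp⟩
        · have hp : p ≠ z := fun h => hzn q (h ▸ hpq)
          have hq : q ≠ z := fun h => hnz p (h ▸ hpq)
          simp only [if_neg hp, if_neg hq]
          exact hf p q hpq h1 h2 h3 h4
        · grind
        · grind
      · intro x hax hbx
        by_cases hx : x = z
        · subst hx
          have := hnz a
          have := hnz b
          have := hG'.ne
          clear ih hf hfx
          grind
        · have h1 : G.Adj a x := by grind
          have h2 : G.Adj b x := by grind
          simp only [if_neg hx]
          exact hfx x h1 h2
    · -- An edge at the new vertex has exactly one common neighbour, the other endpoint of `uv`.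
      refine ⟨fun _ => if a = u ∨ b = u then v else u, fun _ _ _ _ _ _ _ => rfl, ?_⟩
      intro x hax hbx
      have := huv.ne
      have := hzn x
      have := hnz x
      have hirr : ∀ p, ¬ G.Adj p p := fun p hp => hp.ne rfl
      have := hirr u
      have := hirr v
      clear ih hmem hirr
      rcases hab with hab | ⟨rfl, rfl | rfl⟩ | ⟨rfl, rfl | rfl⟩
      · exact absurd hab hG'
      all_goals grind

/-! ### Hamiltonian cycles of 2-trees without edges in three triangles -/

/-- Every edge of `G` lies in at most two triangles. -/
def AtMostTwoTriangles (G : SimpleGraph ℕ) : Prop :=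
  ∀ a b x y w, G.Adj a b → G.Adj a x → G.Adj b x → G.Adj a y → G.Adj b y →
    G.Adj a w → G.Adj b w → x = y ∨ x = w ∨ y = w

/-- `ab` is an outer edge of `G`: an edge lying in at most one triangle. -/
def IsOuterEdge (G : SimpleGraph ℕ) (a b : ℕ) : Prop :=
  G.Adj a b ∧ ∀ x y, G.Adj a x → G.Adj b x → G.Adj a y → G.Adj b y → x = y

theorem IsOuterEdge.symm {G : SimpleGraph ℕ} {a b : ℕ} (h : IsOuterEdge G a b) :
    IsOuterEdge G b a :=
  ⟨h.1.symm, fun x y h1 h2 h3 h4 => h.2 x y h2 h1 h4 h3⟩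

/-- A Hamiltonian cycle traversing the edge `uv` from `u` to `v` leaves a Hamiltonian path from
`v` to `u` when that edge is removed. -/
theorem exists_path_of_dart {V : Finset ℕ} {G : SimpleGraph ℕ} {a u v : ℕ} (p : G.Walk a a)
    (hp : IsHamCycleOn V p) (d : G.Dart) (hd : d ∈ p.darts) (hu : d.fst = u) (hv : d.snd = v) :
    ∃ q : G.Walk v u, IsHamPathOn V q ∧ ∀ e ∈ p.edges, e = s(u, v) ∨ e ∈ q.edges := by
  have hus : u ∈ p.support := hu ▸ Walk.dart_fst_mem_support_of_mem_darts p hd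
  have hc := hp.1.rotate hus
  have hd' : d ∈ (p.rotate u hus).darts := (p.rotate_darts u hus).mem_iff.2 hd
  have he : ∀ e ∈ p.edges, e ∈ (p.rotate u hus).edges :=
    fun e h => (p.rotate_edges u hus).mem_iff.2 h
  have hs : ∀ x, x ∈ (p.rotate u hus).support ↔ x ∈ V := fun x => by
    rw [Walk.mem_support_rotate_iff]; exact hp.2 x
  revert hc hd' he hs
  generalize p.rotate u hus = c
  intro hc hd' he hs
  cases c with
  | nil => exact absurd hc Walk.not_isCycle_nil
  | @cons _ w _ h q =>
    rw [Walk.cons_isCycle_iff] at hc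
    have hwv : w = v := by
      rw [Walk.darts_cons, List.mem_cons] at hd'
      rcases hd' with rfl | hd'
      · exact hv
      · exfalso
        -- `q` is a path ending at `u`, so it has no dart starting at `u`.
        have h1 : u ∈ q.support.dropLast := by
          rw [← Walk.map_fst_darts]
          exact List.mem_map.2 ⟨d, hd', hu⟩
        have h2 := hc.1.support_nodup
        rw [← List.dropLast_append_getLast q.support_ne_nil, Walk.getLast_support] at h2
        exact (List.disjoint_of_nodup_append h2) h1 (by simp)
    subst hwv
    refine ⟨q, ⟨hc.1, fun x => ?_⟩, fun e h => ?_⟩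
    · rw [← hs x, Walk.support_cons, List.mem_cons]
      constructor
      · exact Or.inr
      · rintro (rfl | h)
        · exact q.end_mem_support
        · exact h
    · simpa using he e h

theorem exists_path_of_edge {V : Finset ℕ} {G : SimpleGraph ℕ} {a u v : ℕ} (p : G.Walk a a)
    (hp : IsHamCycleOn V p) (huv : s(u, v) ∈ p.edges) :
    ∃ q : G.Walk v u, IsHamPathOn V q ∧ ∀ e ∈ p.edges, e = s(u, v) ∨ e ∈ q.edges := by
  obtain ⟨d, hd, hde⟩ := List.mem_map.1 huv
  rcases (Sym2.eq_iff.1 hde : d.fst = u ∧ d.snd = v ∨ d.fst = v ∧ d.snd = u) with h | h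
  · exact exists_path_of_dart p hp d hd h.1 h.2
  · obtain ⟨q, hq, he⟩ := exists_path_of_dart p hp d hd h.1 h.2
    refine ⟨q.reverse, ⟨hq.1.reverse, fun x => ?_⟩, fun e h => ?_⟩
    · rw [Walk.support_reverse, List.mem_reverse]; exact hq.2 x
    · rw [Walk.edges_reverse, List.mem_reverse, Sym2.eq_swap]; exact he e h

/-- If every edge of a 2-tree lies in at most two triangles then the 2-tree is a single edge or has
a Hamiltonian cycle through all its outer edges. In the second case each edge lies in a triangle,
so an outer edge on which a vertex is attached is no longer outer. -/
theorem IsTwoTree.exists_hamCycle {V : Finset ℕ} {G : SimpleGraph ℕ} (h : IsTwoTree V G) :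
    AtMostTwoTriangles G →
      (∃ a b, a ≠ b ∧ V = {a, b} ∧ G = fromEdgeSet {s(a, b)}) ∨
      ((∀ a b, G.Adj a b → ∃ x, G.Adj a x ∧ G.Adj b x) ∧
        ∃ (a : ℕ) (p : G.Walk a a), IsHamCycleOn V p ∧
          ∀ x y, IsOuterEdge G x y → s(x, y) ∈ p.edges) := by
  induction h with
  | base u v huv => exact fun _ => Or.inl ⟨u, v, huv, rfl, rfl⟩
  | @grow V G hG u v z huv hz hzu hzv ih =>
    intro h2
    right
    have hmem := hG.mem_of_adj
    have hzn : ∀ p, ¬ G.Adj z p := fun p hp => hz (hmem _ _ hp).1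
    have hnz : ∀ p, ¬ G.Adj p z := fun p hp => hz (hmem _ _ hp).2
    have hadj := grow_adj_iff (G := G) hzu hzv
    generalize hG' : G ⊔ fromEdgeSet {s(z, u), s(z, v)} = G' at h2 hadj
    have hle : G ≤ G' := hG' ▸ le_sup_left
    have hzu' : G'.Adj z u := by grind
    have hzv' : G'.Adj z v := by grind
    have h2G : AtMostTwoTriangles G := fun a b x y w h0 h1 h3 h4 h5 h6 h7 =>
      h2 a b x y w (hle h0) (hle h1) (hle h3) (hle h4) (hle h5) (hle h6) (hle h7)
    have houter : IsOuterEdge G u v := by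
      refine ⟨huv, fun x y h1 h3 h4 h5 => ?_⟩
      have hx : x ≠ z := fun h => hnz u (h ▸ h1)
      have hy : y ≠ z := fun h => hnz u (h ▸ h4)
      have := h2 u v x y z (hle huv) (hle h1) (hle h3) (hle h4) (hle h5) hzu'.symm hzv'.symm
      tauto
    have hold : ∀ x y, G.Adj x y → IsOuterEdge G' x y → IsOuterEdge G x y :=
      fun x y h h' => ⟨h, fun a b h1 h3 h4 h5 =>
        h'.2 a b (hle h1) (hle h3) (hle h4) (hle h5)⟩
    -- A Hamiltonian path of `G` from `v` to `u` through the edges that must stay on the cycle.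
    obtain ⟨htri, q, hq, hqe⟩ : (∀ a b, G.Adj a b → s(a, b) = s(u, v) ∨
          ∃ x, G.Adj a x ∧ G.Adj b x) ∧ ∃ q : G.Walk v u, IsHamPathOn V q ∧
          ∀ x y, G.Adj x y → IsOuterEdge G' x y → s(x, y) ∈ q.edges := by
      rcases ih h2G with ⟨a, b, hab, rfl, rfl⟩ | ⟨htri, a, p, hp, hpe⟩
      · simp only [fromEdgeSet_adj, Set.mem_singleton_iff] at huv
        refine ⟨fun x y hxy => Or.inl ?_, Walk.cons (fromEdgeSet_adj _ |>.2
          ⟨Sym2.eq_swap.trans huv.1, huv.2.symm⟩) Walk.nil, ⟨?_, ?_⟩, ?_⟩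
        · simp only [fromEdgeSet_adj, Set.mem_singleton_iff] at hxy
          rw [hxy.1, huv.1]
        · simpa using huv.2.symm
        · intro x
          have := Sym2.eq_iff.1 huv.1
          simp only [Walk.support_cons, Walk.support_nil, List.mem_cons, List.not_mem_nil,
            Finset.mem_insert, Finset.mem_singleton]
          grind
        · intro x y hxy _
          simp only [fromEdgeSet_adj, Set.mem_singleton_iff] at hxy
          rw [Walk.edges_cons, hxy.1, ← huv.1, Sym2.eq_swap]
          exact List.mem_cons_self
      · refine ⟨fun x y hxy => Or.inr (htri x y hxy), ?_⟩
        obtain ⟨q, hq, hqe⟩ := exists_path_of_edge p hp (hpe u v houter)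
        refine ⟨q, hq, fun x y hxy hxy' => ?_⟩
        rcases hqe _ (hpe x y (hold x y hxy hxy')) with h | h
        · exfalso
          -- `uv` lies in a triangle of `G`, and in the new triangle `uvz`.
          have key : IsOuterEdge G' u v := by
            rcases Sym2.eq_iff.1 h with ⟨rfl, rfl⟩ | ⟨rfl, rfl⟩
            · exact hxy'
            · exact hxy'.symm
          obtain ⟨w, hw1, hw2⟩ := htri u v huv
          have := key.2 w z (hle hw1) (hle hw2) hzu'.symm hzv'.symm
          exact hnz u (this ▸ hw1)
        · exact h
    constructor
    · intro a b hab
      by_cases hGab : G.Adj a b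
      · rcases htri a b hGab with h | ⟨x, hx1, hx2⟩
        · refine ⟨z, ?_⟩
          rcases Sym2.eq_iff.1 h with ⟨rfl, rfl⟩ | ⟨rfl, rfl⟩
          · exact ⟨hzu'.symm, hzv'.symm⟩
          · exact ⟨hzv'.symm, hzu'.symm⟩
        · exact ⟨x, hle hx1, hle hx2⟩
      · have huv' := hle huv
        rcases (hadj a b).1 hab with h | ⟨rfl, rfl | rfl⟩ | ⟨rfl, rfl | rfl⟩
        · exact absurd h hGab
        · exact ⟨v, hzv', huv'⟩
        · exact ⟨u, hzu', huv'.symm⟩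
        · exact ⟨v, huv', hzv'⟩
        · exact ⟨u, huv'.symm, hzu'⟩
    · have hzs : z ∉ q.support := fun h => hz ((hq.2 z).1 h)
      refine ⟨u, Walk.cons hzu'.symm (Walk.cons hzv' (q.mapLe hle)), ⟨?_, fun x => ?_⟩, ?_⟩
      · rw [Walk.cons_isCycle_iff, Walk.cons_isPath_iff]
        refine ⟨⟨(Walk.isPath_mapLe hle).2 hq.1, by simpa using hzs⟩, ?_⟩
        rw [Walk.edges_cons, List.mem_cons]
        rintro (h | h)
        · have := huv.ne
          rw [Sym2.eq_iff] at h
          tauto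
        · have := Walk.snd_mem_support_of_mem_edges _ h
          exact hzs (by simpa using this)
      · have h1 := hq.2 x
        have h3 := hq.2 u
        have h4 := (hmem u v huv).1
        simp only [Walk.support_cons, List.mem_cons, Finset.mem_insert,
          Walk.support_mapLe_eq_support]
        clear ih hqe hold htri h2 h2G hadj
        grind
      · intro x y hxy
        simp only [Walk.edges_cons, List.mem_cons, Walk.edges_mapLe_eq_edges]
        rcases (hadj x y).1 hxy.1 with h | ⟨rfl, rfl | rfl⟩ | ⟨rfl, rfl | rfl⟩
        · exact Or.inr (Or.inr (hqe x y h hxy))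
        · exact Or.inl Sym2.eq_swap
        · exact Or.inr (Or.inl rfl)
        · exact Or.inl rfl
        · exact Or.inr (Or.inl Sym2.eq_swap)

/-! ### Chvátal's condition -/

/-- Deleting the endpoints of an edge lying in three triangles leaves at least three components. -/
theorem IsTwoTree.atMostTwoTriangles {V : Finset ℕ} {G : SimpleGraph ℕ} (h : IsTwoTree V G)
    (hS : ∀ S : Finset ℕ, S.Nonempty → S ⊂ V →
      Nat.card ((G.induce ((V : Set ℕ) \ (S : Set ℕ))).ConnectedComponent) ≤ S.card) :
    AtMostTwoTriangles G := by
  intro a b x y w hab hax hbx hay hby haw hbw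
  by_contra! hne
  obtain ⟨f, hf, hfx⟩ := h.exists_labelling a b hab
  have hV := h.mem_of_adj
  have hsub : ({a, b} : Finset ℕ) ⊂ V := by
    refine (Finset.ssubset_iff_of_subset ?_).2 ⟨x, (hV _ _ hax).2, ?_⟩
    · intro t ht
      have := hV a b hab
      grind
    · have := hax.ne'
      have := hbx.ne'
      grind
  have hcard := hS {a, b} ⟨a, by simp⟩ hsub
  rw [Finset.card_pair hab.ne] at hcard
  set T : Set ℕ := (V : Set ℕ) \ (({a, b} : Finset ℕ) : Set ℕ) with hT
  have hfin : Finite T := (V.finite_toSet.subset Set.sdiff_subset)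
  -- The labelling descends to components.
  let g : (G.induce T).ConnectedComponent → ℕ :=
    ConnectedComponent.lift (fun t => f t.1) (by
      intro s t p _
      induction p with
      | nil => rfl
      | @cons s r t hsr p ih =>
        rename_i hp
        refine Eq.trans ?_ (ih hp.of_cons)
        have h1 := s.2.2
        have h2 := r.2.2
        simp only [Finset.coe_insert, Finset.coe_singleton, Set.mem_insert_iff,
          Set.mem_singleton_iff, not_or] at h1 h2
        exact hf _ _ hsr h1.1 h1.2 h2.1 h2.2)
  have hmemT : ∀ t, G.Adj a t → G.Adj b t → t ∈ T := by
    intro t h1 h2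
    refine ⟨(hV _ _ h1).2, ?_⟩
    have := h1.ne'
    have := h2.ne'
    simp only [Finset.coe_insert, Finset.coe_singleton, Set.mem_insert_iff,
      Set.mem_singleton_iff, not_or]
    tauto
  let k : Fin 3 → (G.induce T).ConnectedComponent :=
    ![(G.induce T).connectedComponentMk ⟨x, hmemT x hax hbx⟩,
      (G.induce T).connectedComponentMk ⟨y, hmemT y hay hby⟩,
      (G.induce T).connectedComponentMk ⟨w, hmemT w haw hbw⟩]
  have hgk : ∀ i, g (k i) = ![x, y, w] i := by
    intro i
    fin_cases i
    · exact hfx x hax hbx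
    · exact hfx y hay hby
    · exact hfx w haw hbw
  have hk : Function.Injective k := by
    intro i j hij
    have := congrArg g hij
    rw [hgk, hgk] at this
    fin_cases i <;> fin_cases j <;> simp_all
  have := Nat.card_le_card_of_injective k hk
  rw [Nat.card_fin] at this
  omega

/-- Hamiltonian graphs satisfy Chvátal's condition. Along a Hamiltonian cycle ending in `S`, the
vertex following the last visit to a component of `G - S` lies in `S`, and distinct components give
distinct such vertices. -/
theorem card_components_le_of_hamCycle {V : Finset ℕ} {G : SimpleGraph ℕ} {a : ℕ}
    (p : G.Walk a a) (hp : IsHamCycleOn V p) (S : Finset ℕ) (hne : S.Nonempty) (hSV : S ⊂ V) :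
    Nat.card ((G.induce ((V : Set ℕ) \ (S : Set ℕ))).ConnectedComponent) ≤ S.card := by
  obtain ⟨s, hs⟩ := hne
  have hsp : s ∈ p.support := (hp.2 s).2 (hSV.1 hs)
  have hc := hp.1.rotate hsp
  have hsup : ∀ x, x ∈ (p.rotate s hsp).support ↔ x ∈ V := fun x => by
    rw [Walk.mem_support_rotate_iff]; exact hp.2 x
  revert hc hsup
  generalize p.rotate s hsp = c
  intro hc hsup
  set T : Set ℕ := (V : Set ℕ) \ (S : Set ℕ) with hT
  have key : ∀ K : (G.induce T).ConnectedComponent, ∃ i, i < c.length ∧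
      c.getVert (i + 1) ∈ S ∧
      ∃ h : c.getVert i ∈ T, (G.induce T).connectedComponentMk ⟨_, h⟩ = K := by
    intro K
    classical
    let P : ℕ → Prop := fun i =>
      ∃ h : c.getVert i ∈ T, (G.induce T).connectedComponentMk ⟨_, h⟩ = K
    obtain ⟨⟨x, hx⟩, hxK⟩ := K.exists_rep
    obtain ⟨n, hn, hnl⟩ := (Walk.mem_support_iff_exists_getVert).1 ((hsup x).2 hx.1)
    have hPn : P n := by
      subst hn
      exact ⟨hx, hxK⟩
    have hP := Nat.findGreatest_spec hnl hPn
    set i := Nat.findGreatest P c.length with hi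
    have hil : i ≤ c.length := Nat.findGreatest_le _
    obtain ⟨hiT, hiK⟩ := hP
    have hlt : i < c.length := by
      refine lt_of_le_of_ne hil fun h => ?_
      have : c.getVert i = s := by rw [h, Walk.getVert_length]
      exact hiT.2 (by rw [this]; exact hs)
    refine ⟨i, hlt, ?_, hiT, hiK⟩
    by_contra hnS
    have hT' : c.getVert (i + 1) ∈ T :=
      ⟨(hsup _).1 (c.getVert_mem_support _), hnS⟩
    have hadj : (G.induce T).Adj ⟨_, hT'⟩ ⟨_, hiT⟩ := (c.adj_getVert_succ hlt).symm
    have hP' : P (i + 1) :=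
      ⟨hT', (ConnectedComponent.eq.2 hadj.reachable).trans hiK⟩
    have := Nat.le_findGreatest (Nat.succ_le_of_lt hlt) hP'
    omega
  choose idx hlt hS hidxT hidxK using key
  have hinj : Function.Injective
      (fun K => (⟨c.getVert (idx K + 1), hS K⟩ : S)) := by
    intro K L h
    have h1 : c.getVert (idx K + 1) = c.getVert (idx L + 1) := congrArg Subtype.val h
    have h3 : idx K + 1 = idx L + 1 := hc.getVert_injOn
      ⟨Nat.le_add_left _ _, hlt K⟩ ⟨Nat.le_add_left _ _, hlt L⟩ h1
    have h4 : idx K = idx L := by omega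
    rw [← hidxK K, ← hidxK L]
    congr 2
    rw [h4]
  have := Nat.card_le_card_of_injective _ hinj
  exact this.trans_eq (by rw [Nat.card_eq_fintype_card, Fintype.card_coe])

/-- A 2-tree on at least 3 vertices has a Hamiltonian cycle if and only if for every
nonempty proper subset `S` of the vertex set, deleting `S` leaves at most `|S|`
connected components. -/
theorem two_tree_hamiltonian_cycle_iff_chvatal
    (V : Finset ℕ) (G : SimpleGraph ℕ) (hG : IsTwoTree V G) (hcard : 3 ≤ V.card) :
    (∃ (a : ℕ) (p : G.Walk a a), IsHamCycleOn V p) ↔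
      (∀ S : Finset ℕ, S.Nonempty → S ⊂ V →
        Nat.card ((G.induce ((V : Set ℕ) \ (S : Set ℕ))).ConnectedComponent) ≤ S.card) := by
  constructor
  · rintro ⟨a, p, hp⟩ S hne hSV
    exact card_components_le_of_hamCycle p hp S hne hSV
  · intro hS
    rcases hG.exists_hamCycle (hG.atMostTwoTriangles hS) with
      ⟨a, b, hab, rfl, -⟩ | ⟨-, a, p, hp, -⟩
    · rw [Finset.card_pair hab] at hcard
      omega
    · exact ⟨a, p, hp⟩
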